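/- arXiv:1507.08885 — 3 statements merged into one kernel-verified Lean document; each statement's English description precedes it below -/
import Mathlib

section
/- Let n ≥ 3 and A ∈ ℝ. On the exterior region {x ∈ ℝⁿ : ‖x‖^{n-2} > |A|}, define the matrix-valued function g by g_{jk}(x) = δ_{jk} + (A‖x‖^{2-n}/(1 − A‖x‖^{2-n})) · x_j x_k/‖x‖² (the Cartesian-coordinate components of the t = 0 spatial slice of the n+1–dimensional Schwarzschild metric). Then for every x in this region and every index j, ∑_{i=1}^n ∂_i g_{ij}(x) − ∂_j (∑_{i=1}^n g_{ii}(x)) = (n−1) · (A‖x‖^{2-n}/(1 − A‖x‖^{2-n})) · x_j/‖x‖². -/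
open scoped BigOperators

/-!
Write `g_{ij} = δ_{ij} + φ x_i x_j`, where `φ` is a function of `‖x‖²` alone. The chain rule gives
`∂_k φ = c x_k` for a scalar `c` (`schwarzFactor_hasFDerivAt`), hence
`∂_v g_{ij} = c ⟨x, v⟩ x_i x_j + φ (v_i x_j + x_i v_j)`. Therefore
`∑_i ∂_i g_{ij} = c ‖x‖² x_j + (n + 1) φ x_j` and `∂_j ∑_i g_{ii} = c ‖x‖² x_j + 2 φ x_j`:
the terms with `c` cancel, so the derivative of the radial profile never has to be computed, and
the difference is `(n - 1) φ x_j`. The exterior condition enters only through `x ≠ 0` and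
`A ‖x‖^{2-n} ≠ 1`, which make `φ` differentiable at `x`.
-/

/-- The Cartesian components of the `t = 0` spatial slice of the `n+1`-dimensional
Schwarzschild metric of parameter `A`:
`g_{jk}(x) = δ_{jk} + (A‖x‖^{2-n}/(1 − A‖x‖^{2-n})) · x_j x_k / ‖x‖²`. -/
noncomputable def schwarzG (n : ℕ) (A : ℝ) (i j : Fin n) (x : EuclideanSpace ℝ (Fin n)) : ℝ :=
  (if i = j then (1 : ℝ) else 0) +
    A * ‖x‖ ^ ((2 : ℝ) - n) / (1 - A * ‖x‖ ^ ((2 : ℝ) - n)) * (x i * x j / ‖x‖ ^ 2)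

/-- The radial factor `φ(x) = (A‖x‖^{2-n} / (1 − A‖x‖^{2-n})) / ‖x‖²`, for which
`g_{ij} = δ_{ij} + φ x_i x_j`. -/
noncomputable def schwarzFactor (n : ℕ) (A : ℝ) (x : EuclideanSpace ℝ (Fin n)) : ℝ :=
  A * ‖x‖ ^ ((2 : ℝ) - n) / (1 - A * ‖x‖ ^ ((2 : ℝ) - n)) / ‖x‖ ^ 2

/-- The gradient of the radial factor is a multiple of the position vector. -/
lemma schwarzFactor_hasFDerivAt (n : ℕ) (A : ℝ) (x : EuclideanSpace ℝ (Fin n)) (hx0 : x ≠ 0)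
    (hA : 1 - A * ‖x‖ ^ ((2 : ℝ) - n) ≠ 0) :
    ∃ c : ℝ, HasFDerivAt (schwarzFactor n A) (c • innerSL ℝ x) x := by
  -- The profile of `φ` as a function of `s = ‖x‖²`.
  let ψ : ℝ → ℝ := fun s =>
    A * √s ^ ((2 : ℝ) - n) / (1 - A * √s ^ ((2 : ℝ) - n)) / s
  have hpos : 0 < ‖x‖ := norm_pos_iff.mpr hx0
  have hs : ‖x‖ ^ 2 ≠ 0 := by positivity
  have hsqrt : √(‖x‖ ^ 2) = ‖x‖ := Real.sqrt_sq hpos.le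
  have hψ : DifferentiableAt ℝ ψ (‖x‖ ^ 2) := by
    have h1 : DifferentiableAt ℝ (fun s : ℝ => √s ^ ((2 : ℝ) - n)) (‖x‖ ^ 2) :=
      (differentiableAt_id.sqrt hs).rpow_const (Or.inl (by simpa [hsqrt] using hx0))
    have h2 : DifferentiableAt ℝ (fun s : ℝ => A * √s ^ ((2 : ℝ) - n)) (‖x‖ ^ 2) :=
      h1.const_mul A
    exact (h2.fun_div (h2.const_sub 1) (by rwa [hsqrt])).fun_div differentiableAt_id hs
  refine ⟨deriv ψ (‖x‖ ^ 2) * 2, ?_⟩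
  have h := hψ.hasDerivAt.comp_hasFDerivAt x (hasStrictFDerivAt_norm_sq x).hasFDerivAt
  have heq : schwarzFactor n A = ψ ∘ fun y => ‖y‖ ^ 2 := by
    funext y
    simp [ψ, schwarzFactor, Real.sqrt_sq (norm_nonneg y)]
  rw [heq]
  refine h.congr_fderiv ?_
  ext v
  simp [mul_assoc]

lemma schwarzG_hasFDerivAt (n : ℕ) (A : ℝ) (x : EuclideanSpace ℝ (Fin n)) (c : ℝ)
    (hc : HasFDerivAt (schwarzFactor n A) (c • innerSL ℝ x) x) (i j : Fin n) :
    ∃ L : EuclideanSpace ℝ (Fin n) →L[ℝ] ℝ, HasFDerivAt (schwarzG n A i j) L x ∧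
      ∀ v, L v = c * inner ℝ x v * (x i * x j) + schwarzFactor n A x * (v i * x j + x i * v j) := by
  have hcoord (k : Fin n) : HasFDerivAt (fun y : EuclideanSpace ℝ (Fin n) => y k)
      (EuclideanSpace.proj k : EuclideanSpace ℝ (Fin n) →L[ℝ] ℝ) x :=
    (EuclideanSpace.proj k : EuclideanSpace ℝ (Fin n) →L[ℝ] ℝ).hasFDerivAt
  have h := (hc.fun_mul ((hcoord i).fun_mul (hcoord j))).const_add (if i = j then (1 : ℝ) else 0)
  refine ⟨_, h.congr_of_eventuallyEq (Filter.Eventually.of_forall fun y => ?_), fun v => ?_⟩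
  · simp only [schwarzG, schwarzFactor]
    ring
  · simp
    ring

/-- On the exterior region `‖x‖^{n-2} > |A|`, the integrand of the ADM mass integral of the
spatial Schwarzschild slice satisfies the exact identity
`∑_i ∂_i g_{ij} − ∂_j ∑_i g_{ii} = (n−1) (A‖x‖^{2-n}/(1 − A‖x‖^{2-n})) x_j/‖x‖²`. -/
theorem schwarzschild_flux_integrand (n : ℕ) (hn : 3 ≤ n) (A : ℝ)
    (x : EuclideanSpace ℝ (Fin n)) (hx : |A| < ‖x‖ ^ (n - 2)) (j : Fin n) :
    (∑ i, fderiv ℝ (schwarzG n A i j) x (EuclideanSpace.single i 1)) -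
      fderiv ℝ (fun y => ∑ i, schwarzG n A i i y) x (EuclideanSpace.single j 1) =
    (n - 1) * (A * ‖x‖ ^ ((2 : ℝ) - n) / (1 - A * ‖x‖ ^ ((2 : ℝ) - n))) * (x j / ‖x‖ ^ 2) := by
  have hx0 : x ≠ 0 := by
    rintro rfl
    rw [norm_zero, zero_pow (by omega)] at hx
    exact (abs_nonneg A).not_gt hx
  have hpos : 0 < ‖x‖ := norm_pos_iff.mpr hx0
  have hpow : ‖x‖ ^ ((2 : ℝ) - n) = (‖x‖ ^ (n - 2))⁻¹ := by
    rw [← Real.rpow_natCast, ← Real.rpow_neg hpos.le, Nat.cast_sub (by omega)]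
    congr 1
    push_cast
    ring
  have hA : 1 - A * ‖x‖ ^ ((2 : ℝ) - n) ≠ 0 := by
    have hlt : A * (‖x‖ ^ (n - 2))⁻¹ < 1 := by
      rw [← div_eq_mul_inv, div_lt_one (by positivity)]
      exact (le_abs_self A).trans_lt hx
    rw [hpow]
    exact (sub_pos.mpr hlt).ne'
  obtain ⟨c, hc⟩ := schwarzFactor_hasFDerivAt n A x hx0 hA
  choose L hL hLv using schwarzG_hasFDerivAt n A x c hc
  have htrace := (HasFDerivAt.fun_sum (u := Finset.univ) fun i _ => hL i i).fderiv
  have hnorm : ∑ i, x i * x i = ‖x‖ ^ 2 := by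
    simp only [EuclideanSpace.real_norm_sq_eq, ← sq]
  have hdiv : ∑ i, L i j (EuclideanSpace.single i 1)
      = c * ‖x‖ ^ 2 * x j + (n + 1) * schwarzFactor n A x * x j := by
    have hterm (i : Fin n) : L i j (EuclideanSpace.single i 1)
        = c * x j * (x i * x i) + schwarzFactor n A x * x j
          + schwarzFactor n A x * (if j = i then x i else 0) := by
      rw [hLv]
      simp [EuclideanSpace.inner_single_right]
      split_ifs <;> ring
    simp only [hterm, Finset.sum_add_distrib, ← Finset.mul_sum, hnorm]
    simp
    ring
  have htr : ∑ i, L i i (EuclideanSpace.single j 1)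
      = c * ‖x‖ ^ 2 * x j + 2 * schwarzFactor n A x * x j := by
    have hterm (i : Fin n) : L i i (EuclideanSpace.single j 1)
        = c * x j * (x i * x i) + 2 * schwarzFactor n A x * (if i = j then x i else 0) := by
      rw [hLv]
      simp [EuclideanSpace.inner_single_right]
      split_ifs <;> ring
    simp only [hterm, Finset.sum_add_distrib, ← Finset.mul_sum, hnorm]
    simp
    ring
  rw [htrace, sum_apply, htr]
  simp only [(hL _ j).fderiv]
  rw [hdiv]
  simp only [schwarzFactor]
  ring
end

section
/- Let n ≥ 2, let E be a real Banach space, and let R > 0, C ≥ 0, τ > 0. Suppose f : {x ∈ ℝⁿ : ‖x‖ ≥ R} → E is differentiable and its derivative satisfies ‖Df(x)‖ ≤ C‖x‖^{−τ−1} for all x with ‖x‖ ≥ R. Then there exists a limit value L ∈ E such that ‖f(x) − L‖ ≤ C(π + 1/τ)‖x‖^{−τ} for all x with ‖x‖ ≥ R. In particular, f converges to L at infinity at the rate O(‖x‖^{−τ}). -/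
/-!
Along a radial ray `t ↦ t • u` with `‖u‖ = 1` the derivative of `t ↦ f (t • u)` has norm at most
`C t^{-τ-1}`, so by the mean value inequality `f` varies by at most
`(C/τ) r^{-τ}` beyond radius `r` (`radial_bound`). Along a great circle of radius `r` the speed
is `r`, the length of a minimal arc is at most `π r`, so `f` varies by at most `C π r^{-τ}` on the
sphere of radius `r` (`sphere_bound`). Fix one ray: the radial bound makes `f` Cauchy along it,
with limit `L`. A point `x` is joined to the point of that ray of the same norm by a great circle,
and then to infinity along the ray; the two bounds add up to the claim.
-/

/-- Mean value inequality along a ray. The comparison function is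
`B t = (C/τ) (r^{-τ} - t^{-τ})`, whose derivative is `C t^{-τ-1}`. -/
theorem radial_bound {V E : Type*} [NormedAddCommGroup V] [NormedSpace ℝ V]
    [NormedAddCommGroup E] [NormedSpace ℝ E]
    {R C τ : ℝ} (hR : 0 < R) (hC : 0 ≤ C) (hτ : 0 < τ) {f : V → E}
    (hdiff : ∀ x : V, R ≤ ‖x‖ → DifferentiableAt ℝ f x)
    (hder : ∀ x : V, R ≤ ‖x‖ → ‖fderiv ℝ f x‖ ≤ C * ‖x‖ ^ (-τ - 1))
    {u : V} (hu : ‖u‖ = 1) {r s : ℝ} (hr : R ≤ r) (hrs : r ≤ s) :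
    ‖f (s • u) - f (r • u)‖ ≤ C * (1 / τ) * r ^ (-τ) := by
  have hnorm : ∀ t : ℝ, r ≤ t → ‖t • u‖ = t := fun t ht => by
    rw [norm_smul, hu, mul_one, Real.norm_of_nonneg (by linarith)]
  have hd : ∀ t ∈ Set.Icc r s,
      HasDerivAt (fun t : ℝ => f (t • u) - f (r • u)) (fderiv ℝ f (t • u) u) t := by
    intro t ht
    have h1 : HasDerivAt (fun t : ℝ => t • u) u t := by
      simpa using (hasDerivAt_id t).smul_const u
    have h2 := (hdiff (t • u) (by rw [hnorm t ht.1]; linarith [ht.1])).hasFDerivAt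
    exact (h2.comp_hasDerivAt t h1).sub_const _
  have hB : ∀ t ∈ Set.Icc r s,
      HasDerivAt (fun t : ℝ => C * (1 / τ) * (r ^ (-τ) - t ^ (-τ))) (C * t ^ (-τ - 1)) t := by
    intro t ht
    have h0 : t ≠ 0 := by linarith [ht.1]
    have h1 := ((Real.hasDerivAt_rpow_const (p := -τ) (Or.inl h0)).const_sub
      (r ^ (-τ))).const_mul (C * (1 / τ))
    refine h1.congr_deriv ?_
    field_simp
  have key := image_norm_le_of_norm_deriv_right_le_deriv_boundary'
    (f := fun t : ℝ => f (t • u) - f (r • u)) (a := r) (b := s)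
    (fun t ht => (hd t ht).continuousAt.continuousWithinAt)
    (fun t ht => (hd t (Set.Ico_subset_Icc_self ht)).hasDerivWithinAt)
    (B := fun t : ℝ => C * (1 / τ) * (r ^ (-τ) - t ^ (-τ)))
    (B' := fun t => C * t ^ (-τ - 1)) (by simp)
    (fun t ht => (hB t ht).continuousAt.continuousWithinAt)
    (fun t ht => (hB t (Set.Ico_subset_Icc_self ht)).hasDerivWithinAt)
    (fun t ht => by
      have h1 := hder (t • u) (by rw [hnorm t ht.1]; linarith [ht.1])
      rw [hnorm t ht.1] at h1
      calc _ ≤ ‖fderiv ℝ f (t • u)‖ * ‖u‖ := ContinuousLinearMap.le_opNorm _ _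
        _ ≤ _ := by rw [hu, mul_one]; exact h1)
    (Set.right_mem_Icc.2 hrs)
  refine key.trans ?_
  have hs : 0 ≤ s ^ (-τ) := Real.rpow_nonneg (by linarith) _
  exact mul_le_mul_of_nonneg_left (by linarith) (by positivity)

/-- In dimension at least two, points `x`, `y` of equal norm lie on a great circle
`t ↦ cos t • x + sin t • w`, at parameters `0` and `θ ∈ [0, π]`. -/
theorem exists_great_circle {n : ℕ} (hn : 2 ≤ n) {x y : EuclideanSpace ℝ (Fin n)}
    (hx : x ≠ 0) (hxy : ‖x‖ = ‖y‖) :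
    ∃ (w : EuclideanSpace ℝ (Fin n)) (θ : ℝ), θ ∈ Set.Icc 0 Real.pi ∧ ‖w‖ = ‖x‖ ∧
      inner ℝ x w = 0 ∧ y = Real.cos θ • x + Real.sin θ • w := by
  set θ := InnerProductGeometry.angle x y with hθ
  have hmem : θ ∈ Set.Icc 0 Real.pi :=
    ⟨InnerProductGeometry.angle_nonneg x y, InnerProductGeometry.angle_le_pi x y⟩
  have hin : inner ℝ x y = Real.cos θ * (‖x‖ * ‖x‖) := by
    have := InnerProductGeometry.cos_angle_mul_norm_mul_norm x y
    rw [← this, ← hxy]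
  -- `p` is the component of `y` orthogonal to `x`; it has norm `‖x‖ sin θ`.
  set p := y - Real.cos θ • x with hp
  have hxp : inner ℝ x p = 0 := by
    rw [hp, inner_sub_right, inner_smul_right, hin, real_inner_self_eq_norm_mul_norm]; ring
  have hpn : ‖p‖ = Real.sin θ * ‖x‖ := by
    have hs := Real.sin_nonneg_of_mem_Icc hmem
    refine (sq_eq_sq₀ (norm_nonneg _) (by positivity)).1 ?_
    rw [hp, norm_sub_sq_real, inner_smul_right, real_inner_comm, hin, norm_smul, ← hxy, mul_pow,
      mul_pow, Real.sin_sq, Real.norm_eq_abs, sq_abs]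
    ring
  by_cases hsin : Real.sin θ = 0
  · -- Here `y = ± x`, and `w` can be any vector of the right norm orthogonal to `x`.
    have hp0 : p = 0 := by rw [← norm_eq_zero, hpn, hsin, zero_mul]
    have hfin : 0 < Module.finrank ℝ (ℝ ∙ x)ᗮ := by
      have h1 := Submodule.finrank_add_finrank_orthogonal (ℝ ∙ x)
      rw [finrank_span_singleton hx, finrank_euclideanSpace_fin] at h1
      omega
    have : Nontrivial (ℝ ∙ x)ᗮ := Module.finrank_pos_iff.1 hfin
    obtain ⟨w, hw⟩ := exists_norm_eq (ℝ ∙ x)ᗮ (norm_nonneg x)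
    refine ⟨w, θ, hmem, hw, Submodule.mem_orthogonal_singleton_iff_inner_right.1 w.2, ?_⟩
    rw [hsin, zero_smul, add_zero]
    exact sub_eq_zero.1 hp0
  · refine ⟨(Real.sin θ)⁻¹ • p, θ, hmem, ?_, ?_, ?_⟩
    · rw [norm_smul, hpn, norm_inv,
        Real.norm_of_nonneg (Real.sin_nonneg_of_mem_Icc hmem)]
      field_simp
    · rw [inner_smul_right, hxp, mul_zero]
    · rw [smul_inv_smul₀ hsin, hp]; abel

/-- Mean value inequality along a minimal great-circle arc. -/
theorem sphere_bound {n : ℕ} (hn : 2 ≤ n)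
    {E : Type*} [NormedAddCommGroup E] [NormedSpace ℝ E]
    {R C τ : ℝ} (hR : 0 < R) (hC : 0 ≤ C)
    {f : EuclideanSpace ℝ (Fin n) → E}
    (hdiff : ∀ x : EuclideanSpace ℝ (Fin n), R ≤ ‖x‖ → DifferentiableAt ℝ f x)
    (hder : ∀ x : EuclideanSpace ℝ (Fin n), R ≤ ‖x‖ → ‖fderiv ℝ f x‖ ≤ C * ‖x‖ ^ (-τ - 1))
    {x y : EuclideanSpace ℝ (Fin n)} (hx : R ≤ ‖x‖) (hxy : ‖x‖ = ‖y‖) :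
    ‖f y - f x‖ ≤ C * Real.pi * ‖x‖ ^ (-τ) := by
  have hx0 : 0 < ‖x‖ := by linarith
  obtain ⟨w, θ, hθ, hw, hxw, rfl⟩ := exists_great_circle hn (norm_pos_iff.1 hx0) hxy
  have hcirc : ∀ a b : ℝ, a ^ 2 + b ^ 2 = 1 → ‖a • x + b • w‖ = ‖x‖ := by
    intro a b hab
    refine (sq_eq_sq₀ (norm_nonneg _) (norm_nonneg _)).1 ?_
    rw [norm_add_sq_real, inner_smul_left, inner_smul_right, hxw, norm_smul, norm_smul, hw,
      mul_pow, mul_pow, Real.norm_eq_abs, Real.norm_eq_abs, sq_abs, sq_abs]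
    linear_combination ‖x‖ ^ 2 * hab
  have hγ : ∀ t : ℝ, ‖Real.cos t • x + Real.sin t • w‖ = ‖x‖ := fun t =>
    hcirc _ _ (Real.cos_sq_add_sin_sq t)
  have hγ' : ∀ t : ℝ, ‖(-Real.sin t) • x + Real.cos t • w‖ = ‖x‖ := fun t =>
    hcirc _ _ (by rw [neg_sq, Real.sin_sq_add_cos_sq])
  have hd : ∀ t : ℝ, HasDerivAt (fun t : ℝ => f (Real.cos t • x + Real.sin t • w))
      (fderiv ℝ f (Real.cos t • x + Real.sin t • w) ((-Real.sin t) • x + Real.cos t • w)) t := by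
    intro t
    have h1 := ((Real.hasDerivAt_cos t).smul_const x).add ((Real.hasDerivAt_sin t).smul_const w)
    have h2 := (hdiff (Real.cos t • x + Real.sin t • w) (by rw [hγ]; exact hx)).hasFDerivAt
    exact h2.comp_hasDerivAt t h1
  have hbound : ∀ t : ℝ, ‖fderiv ℝ f (Real.cos t • x + Real.sin t • w)
      ((-Real.sin t) • x + Real.cos t • w)‖ ≤ C * ‖x‖ ^ (-τ) := by
    intro t
    have h1 := hder (Real.cos t • x + Real.sin t • w) (by rw [hγ]; exact hx)
    rw [hγ] at h1
    calc _ ≤ ‖fderiv ℝ f (Real.cos t • x + Real.sin t • w)‖ * ‖x‖ := by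
          rw [← hγ' t]; exact ContinuousLinearMap.le_opNorm _ _
      _ ≤ C * ‖x‖ ^ (-τ - 1) * ‖x‖ := by gcongr
      _ = C * ‖x‖ ^ (-τ) := by
          rw [Real.rpow_sub_one hx0.ne']; field_simp
  have key := norm_image_sub_le_of_norm_deriv_le_segment'
    (fun t (_ : t ∈ Set.Icc 0 θ) => (hd t).hasDerivWithinAt)
    (fun t _ => hbound t) θ (Set.right_mem_Icc.2 hθ.1)
  simp only [Real.cos_zero, Real.sin_zero, one_smul, zero_smul, add_zero, sub_zero] at key
  calc _ ≤ C * ‖x‖ ^ (-τ) * θ := key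
    _ ≤ C * ‖x‖ ^ (-τ) * Real.pi := by gcongr; exact hθ.2
    _ = _ := by ring

/-- If `f` is a differentiable function on the exterior region `{‖x‖ ≥ R}` of `ℝⁿ` (`n ≥ 2`)
with values in a Banach space `E`, whose derivative decays like `C‖x‖^{−τ−1}`, then `f` has a
limit `L` at infinity, approached at the rate `C(π + 1/τ)‖x‖^{−τ}`. -/
theorem decay_of_deriv_gives_limit (n : ℕ) (hn : 2 ≤ n)
    (E : Type*) [NormedAddCommGroup E] [NormedSpace ℝ E] [CompleteSpace E]
    (R C τ : ℝ) (hR : 0 < R) (hC : 0 ≤ C) (hτ : 0 < τ)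
    (f : EuclideanSpace ℝ (Fin n) → E)
    (hdiff : ∀ x : EuclideanSpace ℝ (Fin n), R ≤ ‖x‖ → DifferentiableAt ℝ f x)
    (hder : ∀ x : EuclideanSpace ℝ (Fin n), R ≤ ‖x‖ → ‖fderiv ℝ f x‖ ≤ C * ‖x‖ ^ (-τ - 1)) :
    ∃ L : E, ∀ x : EuclideanSpace ℝ (Fin n), R ≤ ‖x‖ →
      ‖f x - L‖ ≤ C * (Real.pi + 1 / τ) * ‖x‖ ^ (-τ) := by
  have : Nontrivial (EuclideanSpace ℝ (Fin n)) :=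
    (Module.finrank_pos_iff (R := ℝ)).1 (by rw [finrank_euclideanSpace_fin]; omega)
  obtain ⟨u, hu⟩ := exists_norm_eq (EuclideanSpace ℝ (Fin n)) zero_le_one
  have hrad : ∀ r s : ℝ, R ≤ r → r ≤ s →
      ‖f (s • u) - f (r • u)‖ ≤ C * (1 / τ) * r ^ (-τ) := fun r s hr hrs =>
    radial_bound hR hC hτ hdiff hder hu hr hrs
  have hatTop : Filter.Tendsto (fun k : ℕ => R + k) Filter.atTop Filter.atTop :=
    Filter.tendsto_atTop_add_const_left _ R tendsto_natCast_atTop_atTop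
  have hcauchy : CauchySeq (fun k : ℕ => f ((R + k) • u)) := by
    refine cauchySeq_of_le_tendsto_0' (fun k : ℕ => C * (1 / τ) * (R + k) ^ (-τ)) ?_ ?_
    · intro k m hkm
      rw [dist_comm, dist_eq_norm]
      have : (k : ℝ) ≤ m := by exact_mod_cast hkm
      exact hrad _ _ (by linarith [k.cast_nonneg (α := ℝ)]) (by linarith)
    · simpa using ((tendsto_rpow_neg_atTop hτ).comp hatTop).const_mul (C * (1 / τ))
  obtain ⟨L, hL⟩ := cauchySeq_tendsto_of_complete hcauchy
  refine ⟨L, fun x hx => ?_⟩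
  refine le_of_tendsto (hL.const_sub (f x)).norm ?_
  filter_upwards [hatTop.eventually_ge_atTop ‖x‖] with k hk
  have h1 := sphere_bound hn hR hC hdiff hder hx (y := ‖x‖ • u) (by
    rw [norm_smul, hu, mul_one, norm_norm])
  have h2 := hrad ‖x‖ (R + k) hx hk
  rw [norm_sub_rev] at h1 h2
  calc ‖f x - f ((R + k) • u)‖
      ≤ ‖f x - f (‖x‖ • u)‖ + ‖f (‖x‖ • u) - f ((R + k) • u)‖ :=
        norm_sub_le_norm_sub_add_norm_sub _ _ _
    _ ≤ C * Real.pi * ‖x‖ ^ (-τ) + C * (1 / τ) * ‖x‖ ^ (-τ) := add_le_add h1 h2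
    _ = _ := by ring
end

section
/- Let n ≥ 3, M ∈ ℝ, ρ > 0, and ω ∈ ℝ. Define the Newtonian potential Φ : ℝⁿ \ {0} → ℝ by Φ(x) = M‖x‖^{2−n}, and the circular curve c : ℝ → ℝⁿ by c(t) = (ρ cos(ωt), ρ sin(ωt), 0, …, 0). Then c satisfies the equation of motion c″(t) = ∇Φ(c(t)) for all t ∈ ℝ if and only if ω² = (n−2)M/ρⁿ. -/
/-!
Away from the origin `∇Φ(x) = -((n - 2) M / ‖x‖ⁿ) x` (`hasGradientAt_mul_norm_rpow`), and the
circular curve satisfies `c″ = -ω² c`. As `‖c(t)‖ = ρ` for all `t`, the equation of motion says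
that `ω² c(t) = ((n - 2) M / ρⁿ) c(t)`, and `c(t) ≠ 0` lets the coefficients be compared.
-/

/-- Obtained from the smooth function `‖x‖²` by writing `‖x‖ ^ p = (‖x‖²) ^ (p / 2)`. -/
lemma hasGradientAt_mul_norm_rpow {E : Type*} [NormedAddCommGroup E] [InnerProductSpace ℝ E]
    [CompleteSpace E] (M p : ℝ) {x : E} (hx : x ≠ 0) :
    HasGradientAt (fun y : E => M * ‖y‖ ^ p) ((M * (p * ‖x‖ ^ (p - 2))) • x) x := by
  have hpos : 0 < ‖x‖ := norm_pos_iff.mpr hx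
  have hsq : ∀ (y : E) (q : ℝ), (‖y‖ ^ 2) ^ q = ‖y‖ ^ (2 * q) := fun y q => by
    rw [← Real.rpow_natCast, ← Real.rpow_mul (norm_nonneg y)]
    norm_num
  have h1 : HasFDerivAt (fun y : E => ‖y‖ ^ 2) (2 • innerSL ℝ x) x :=
    (hasStrictFDerivAt_norm_sq x).hasFDerivAt
  have h2 := (h1.rpow_const (p := p / 2) (Or.inl (by positivity))).const_mul M
  have hf : (fun y : E => M * (‖y‖ ^ 2) ^ (p / 2)) = fun y => M * ‖y‖ ^ p := by
    ext y
    rw [hsq, mul_div_cancel₀ p two_ne_zero]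
  have e : 2 * (p / 2 - 1) = p - 2 := by ring
  rw [hf, hsq, e] at h2
  rw [hasGradientAt_iff_hasFDerivAt]
  refine h2.congr_fderiv ?_
  ext y
  simp [-mul_eq_mul_left_iff, -mul_eq_mul_right_iff]
  ring

/-- A uniform circular motion has acceleration `-ω²` times its position. -/
lemma deriv_deriv_circular {E : Type*} [NormedAddCommGroup E] [NormedSpace ℝ E] (ρ ω : ℝ)
    (u v : E) (t : ℝ) :
    deriv (deriv fun s : ℝ => (ρ * Real.cos (ω * s)) • u + (ρ * Real.sin (ω * s)) • v) t =
      (-ω ^ 2) • ((ρ * Real.cos (ω * t)) • u + (ρ * Real.sin (ω * t)) • v) := by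
  have hl : ∀ s : ℝ, HasDerivAt (fun s : ℝ => ω * s) ω s := fun s => by
    simpa using (hasDerivAt_id s).const_mul ω
  have hd : ∀ s : ℝ, HasDerivAt
      (fun s : ℝ => (ρ * Real.cos (ω * s)) • u + (ρ * Real.sin (ω * s)) • v)
      ((ρ * (-Real.sin (ω * s) * ω)) • u + (ρ * (Real.cos (ω * s) * ω)) • v) s := fun s =>
    (((hl s).cos.const_mul ρ).smul_const u).add (((hl s).sin.const_mul ρ).smul_const v)
  have hd' : ∀ s : ℝ, HasDerivAt
      (fun s : ℝ => (ρ * (-Real.sin (ω * s) * ω)) • u + (ρ * (Real.cos (ω * s) * ω)) • v)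
      ((ρ * (-(Real.cos (ω * s) * ω) * ω)) • u + (ρ * (-Real.sin (ω * s) * ω * ω)) • v) s :=
    fun s => (((((hl s).sin.neg).mul_const ω).const_mul ρ).smul_const u).add
      (((((hl s).cos).mul_const ω).const_mul ρ).smul_const v)
  rw [funext fun s => (hd s).deriv, (hd' t).deriv]
  module

/-- Generalized Kepler third law: a circular orbit
`c(t) = (ρ cos ωt, ρ sin ωt, 0, …, 0)` in `ℝⁿ` (`n ≥ 3`) satisfies the Newtonian
equation of motion `c″ = ∇Φ(c)` for the potential `Φ(x) = M‖x‖^{2−n}` if and only if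
`ω² = (n−2)M/ρⁿ`. -/
theorem kepler_third_law (n : ℕ) (hn : 3 ≤ n) (M ρ ω : ℝ) (hρ : 0 < ρ)
    (c : ℝ → EuclideanSpace ℝ (Fin n))
    (hc : ∀ t : ℝ, ∀ i : Fin n, c t i =
      if (i : ℕ) = 0 then ρ * Real.cos (ω * t)
      else if (i : ℕ) = 1 then ρ * Real.sin (ω * t) else 0) :
    (∀ t : ℝ, deriv (deriv c) t =
        gradient (fun x : EuclideanSpace ℝ (Fin n) => M * ‖x‖ ^ ((2 : ℝ) - n)) (c t)) ↔
      ω ^ 2 = (n - 2) * M / ρ ^ n := by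
  obtain ⟨m, rfl⟩ : ∃ m, n = m + 2 := ⟨n - 2, by omega⟩
  have hform : c = fun s : ℝ => (ρ * Real.cos (ω * s)) • EuclideanSpace.single 0 (1 : ℝ) +
      (ρ * Real.sin (ω * s)) • EuclideanSpace.single 1 (1 : ℝ) := by
    ext s i
    rw [hc]
    refine Fin.cases ?_ (fun j => Fin.cases ?_ (fun k => ?_) j) i
    · simp
    · simp
    · simp [Fin.ext_iff]
  have hnorm : ∀ t, ‖c t‖ = ρ := fun t => by
    rw [EuclideanSpace.norm_eq, Real.sqrt_eq_iff_mul_self_eq (by positivity) hρ.le,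
      Fin.sum_univ_succ, Fin.sum_univ_succ]
    simp only [hc, Real.norm_eq_abs, sq_abs]
    simp [-mul_eq_mul_left_iff, -mul_eq_mul_right_iff]
    linear_combination ρ ^ 2 * Real.sin_sq_add_cos_sq (ω * t)
  have hne : ∀ t, c t ≠ 0 := fun t => norm_pos_iff.mp ((hnorm t).symm ▸ hρ)
  have hacc : ∀ t, deriv (deriv c) t = (-ω ^ 2) • c t := fun t => by
    rw [hform]
    exact deriv_deriv_circular ρ ω _ _ t
  have hpow : ρ ^ ((2 : ℝ) - (m + 2 : ℕ) - 2) = (ρ ^ (m + 2))⁻¹ := by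
    rw [← Real.rpow_natCast, ← Real.rpow_neg hρ.le]
    ring_nf
  have key : ∀ t, deriv (deriv c) t =
      gradient (fun x : EuclideanSpace ℝ (Fin (m + 2)) =>
        M * ‖x‖ ^ ((2 : ℝ) - (m + 2 : ℕ))) (c t) ↔
      ω ^ 2 = ((m + 2 : ℕ) - 2) * M / ρ ^ (m + 2) := fun t => by
    rw [hacc, (hasGradientAt_mul_norm_rpow M _ (hne t)).gradient, hnorm, hpow,
      smul_left_inj (hne t), div_eq_mul_inv]
    constructor <;> intro h <;> linear_combination -h
  exact ⟨fun h => (key 0).1 (h 0), fun h t => (key t).2 h⟩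
end
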